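/- arXiv:2310.15462 — 3 statements merged into one kernel-verified Lean document; each statement's English description precedes it below -/
import Mathlib

section
/- Under Assumption 2.1, for each n let X_{n,1}, …, X_{n,n} be i.i.d. E-valued random variables with common law P_n. Let g = Σ_{k=1}^m c_k 𝟙_{B_k} with c_k ∈ ℝ and B_k ∈ 𝓔 satisfying μ(B_k) < ∞. Then a_n^{-1/2} Σ_{j=1}^n (g(X_{n,j}) − ∫_E g dP_n) converges in distribution, as n → ∞, to the Gaussian distribution with mean 0 and variance ∫_E g² dμ (interpreted as the Dirac mass at 0 if ∫_E g² dμ = 0). -/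
open MeasureTheory ProbabilityTheory Filter Topology
open scoped ENNReal NNReal

/-- **Assumption 2.1** of the paper, for data `(μ, a, P)`. -/
def Assumption21 {E : Type*} [MeasurableSpace E] (μ : Measure E) (a : ℕ → ℝ)
    (P : ℕ → Measure E) : Prop :=
  μ Set.univ = ∞ ∧
  (∀ n : ℕ, 1 ≤ n → 0 < a n) ∧
  Tendsto a atTop atTop ∧
  Tendsto (fun n : ℕ => a n / n) atTop (𝓝 0) ∧
  (∀ B : Set E, MeasurableSet B → ∀ n : ℕ, 1 ≤ n →
    ENNReal.ofReal ((n : ℝ) / a n) * P n B ≤ ENNReal.ofReal (((n : ℝ) + 1) / a (n + 1)) * P (n + 1) B) ∧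
  (∀ B : Set E, MeasurableSet B →
    Tendsto (fun n : ℕ => ENNReal.ofReal ((n : ℝ) / a n) * P n B) atTop (𝓝 (μ B)))

lemma aux_taylor {E : Type*} [MeasurableSpace E] (Q : Measure E) [IsProbabilityMeasure Q]
    (Y : E → ℝ) (hY : Measurable Y) (K : ℝ) (hK : ∀ x, |Y x| ≤ K) (h0 : ∫ x, Y x ∂Q = 0)
    (u : ℝ) (hu : |u| * K ≤ 1) :
    ‖(∫ x, Complex.exp (((u * Y x : ℝ) : ℂ) * Complex.I) ∂Q) -
      ((1 - u ^ 2 / 2 * ∫ x, Y x ^ 2 ∂Q : ℝ) : ℂ)‖ ≤ |u| ^ 3 * K * ∫ x, Y x ^ 2 ∂Q := by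
  have hK0 : ∀ x, 0 ≤ K := fun x => (abs_nonneg _).trans (hK x)
  have iY : Integrable Y Q := Integrable.of_bound hY.aestronglyMeasurable K
    (Eventually.of_forall fun x => by simpa using hK x)
  have iY2 : Integrable (fun x => Y x ^ 2) Q :=
    Integrable.of_bound (hY.pow_const 2).aestronglyMeasurable (K ^ 2)
    (Eventually.of_forall fun x => by
      rw [Real.norm_eq_abs, abs_pow]
      exact pow_le_pow_left₀ (abs_nonneg _) (hK x) 2)
  have ie : Integrable (fun x => Complex.exp (((u * Y x : ℝ) : ℂ) * Complex.I)) Q :=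
    Integrable.of_bound (by fun_prop) 1
    (Eventually.of_forall fun x => by rw [Complex.norm_exp_ofReal_mul_I])
  have e1 : ((1 - u ^ 2 / 2 * ∫ x, Y x ^ 2 ∂Q : ℝ) : ℂ) =
      ∫ x, (((1 - u ^ 2 / 2 * Y x ^ 2 : ℝ) : ℂ) + ((u * Y x : ℝ) : ℂ) * Complex.I) ∂Q := by
    rw [integral_add, integral_mul_const, integral_complex_ofReal, integral_complex_ofReal,
      integral_const_mul, h0, integral_sub (integrable_const _) (iY2.const_mul _),
      integral_const_mul]
    · simp
    · exact ((integrable_const _).sub (iY2.const_mul _)).ofReal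
    · exact ((iY.const_mul u).ofReal).mul_const _
  have i1 : Integrable (fun x => (((1 - u ^ 2 / 2 * Y x ^ 2 : ℝ) : ℂ)
      + ((u * Y x : ℝ) : ℂ) * Complex.I)) Q :=
    (((integrable_const (1:ℝ)).sub (iY2.const_mul (u ^ 2 / 2))).ofReal).add
      (((iY.const_mul u).ofReal).mul_const _)
  rw [e1, ← integral_sub ie i1, ← integral_const_mul]
  refine norm_integral_le_of_norm_le (iY2.const_mul _) (Eventually.of_forall fun x => ?_)
  have hb : ‖((u * Y x : ℝ) : ℂ) * Complex.I‖ = |u| * |Y x| := by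
    rw [norm_mul, Complex.norm_I, mul_one, Complex.norm_real, Real.norm_eq_abs, abs_mul]
  have hle : ‖((u * Y x : ℝ) : ℂ) * Complex.I‖ ≤ 1 := by
    rw [hb]; exact (mul_le_mul_of_nonneg_left (hK x) (abs_nonneg u)).trans hu
  have hx := Complex.exp_bound hle (n := 3) (by norm_num)
  rw [hb] at hx
  have e2 : ∑ m ∈ Finset.range 3, (((u * Y x : ℝ) : ℂ) * Complex.I) ^ m / (m.factorial : ℂ)
      = (((1 - u ^ 2 / 2 * Y x ^ 2 : ℝ) : ℂ) + ((u * Y x : ℝ) : ℂ) * Complex.I) := by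
    simp only [Finset.sum_range_succ, Finset.sum_range_zero, mul_pow, Complex.I_sq]
    simp [Nat.factorial]
    ring
  rw [e2] at hx
  refine hx.trans ?_
  have : (|u| * |Y x|) ^ 3 * (((3:ℕ).succ : ℝ) * (((3:ℕ).factorial : ℝ) * ((3:ℕ):ℝ))⁻¹)
      ≤ (|u| * |Y x|) ^ 3 * 1 := by
    gcongr
    norm_num [Nat.factorial]
  refine this.trans ?_
  have h3 : (|u| * |Y x|) ^ 3 * 1 = |u| ^ 3 * |Y x| * Y x ^ 2 := by
    rw [← sq_abs (Y x)]; ring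
  rw [h3]
  have := hK x
  gcongr

lemma aux_int {E : Type*} [MeasurableSpace E] (ν : Measure E) {m : ℕ} (c : Fin m → ℝ)
    (B : Fin m → Set E) (hB : ∀ i, MeasurableSet (B i)) (hf : ∀ i, ν (B i) < ∞) :
    ∫ x, ∑ i : Fin m, Set.indicator (B i) (fun _ => c i) x ∂ν = ∑ i, ν.real (B i) * c i := by
  rw [integral_finsetSum]
  · refine Finset.sum_congr rfl fun i _ => ?_
    rw [integral_indicator_const _ (hB i), smul_eq_mul]
  · intro i _
    exact (integrable_indicator_iff (hB i)).2 (integrableOn_const (hf i).ne)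

lemma aux_int2 {E : Type*} [MeasurableSpace E] (ν : Measure E) {m : ℕ} (c : Fin m → ℝ)
    (B : Fin m → Set E) (hB : ∀ i, MeasurableSet (B i)) (hf : ∀ i, ν (B i) < ∞) :
    ∫ x, (∑ i : Fin m, Set.indicator (B i) (fun _ => c i) x) ^ 2 ∂ν
      = ∑ i, ∑ j, ν.real (B i ∩ B j) * (c i * c j) := by
  have hfin : ∀ i j, ν (B i ∩ B j) < ∞ := fun i j =>
    (measure_mono Set.inter_subset_left).trans_lt (hf i)
  have hint : ∀ i j, Integrable (Set.indicator (B i ∩ B j) (fun _ => c i * c j)) ν := fun i j =>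
    (integrable_indicator_iff ((hB i).inter (hB j))).2 (integrableOn_const (hfin i j).ne)
  have : ∀ x, (∑ i : Fin m, Set.indicator (B i) (fun _ => c i) x) ^ 2 =
      ∑ i, ∑ j, Set.indicator (B i ∩ B j) (fun _ => c i * c j) x := by
    intro x
    rw [sq, Finset.sum_mul_sum]
    refine Finset.sum_congr rfl fun i _ => Finset.sum_congr rfl fun j _ => ?_
    by_cases h1 : x ∈ B i <;> by_cases h2 : x ∈ B j <;> simp [h1, h2]
  simp_rw [this]
  rw [integral_finsetSum]
  · refine Finset.sum_congr rfl fun i _ => ?_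
    rw [integral_finsetSum _ (fun j _ => hint i j)]
    refine Finset.sum_congr rfl fun j _ => ?_
    rw [integral_indicator_const _ ((hB i).inter (hB j)), smul_eq_mul]
  · intro i _
    exact integrable_finsetSum _ fun j _ => hint i j

/-- Under Assumption 2.1, with `X_{n,1}, …, X_{n,n}` i.i.d. with law `P n`
and `g` a simple function built from sets of finite `μ`-measure,
`a_n^{-1/2} Σ_{j=1}^n (g(X_{n,j}) − ∫ g dP_n)` converges in distribution to the Gaussian law
with mean `0` and variance `∫ g² dμ` (convergence in distribution is expressed by testing
against all bounded continuous functions). -/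
theorem clt_for_simple_function
    {E Ω : Type*} [MeasurableSpace E] [MeasurableSpace Ω]
    (μ : Measure E) [SigmaFinite μ] [NullSingletonClass μ]
    (a : ℕ → ℝ) (P : ℕ → Measure E) [∀ n, IsProbabilityMeasure (P n)]
    (h21 : Assumption21 μ a P)
    (Pr : Measure Ω) [IsProbabilityMeasure Pr]
    (X : (n : ℕ) → Fin n → Ω → E)
    (hXmeas : ∀ n j, Measurable (X n j))
    (hXlaw : ∀ n : ℕ, 1 ≤ n → ∀ j, Measure.map (X n j) Pr = P n)
    (hXindep : ∀ n : ℕ, iIndepFun (X n) Pr)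
    (m : ℕ) (c : Fin m → ℝ) (B : Fin m → Set E)
    (hBmeas : ∀ i, MeasurableSet (B i)) (hBfin : ∀ i, μ (B i) < ∞)
    (g : E → ℝ) (hgdef : g = fun x => ∑ i : Fin m, Set.indicator (B i) (fun _ => c i) x) :
    ∀ φ : BoundedContinuousFunction ℝ ℝ,
      Tendsto (fun n : ℕ =>
          ∫ ω, φ ((Real.sqrt (a n))⁻¹ *
            ∑ j : Fin n, (g (X n j ω) - ∫ x, g x ∂(P n))) ∂Pr)
        atTop
        (𝓝 (∫ y, φ y ∂(gaussianReal 0 (Real.toNNReal (∫ x, g x ^ 2 ∂μ))))) := by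
  intro φ
  obtain ⟨-, hapos, hatop, han, -, hlim⟩ := h21
  have hgm : Measurable g := by
    rw [hgdef]
    exact Finset.measurable_fun_sum _ fun i _ => measurable_const.indicator (hBmeas i)
  obtain ⟨C, hC⟩ : ∃ C, ∀ x, |g x| ≤ C := by
    refine ⟨∑ i, |c i|, fun x => ?_⟩
    rw [hgdef]
    refine (Finset.abs_sum_le_sum_abs _ _).trans (Finset.sum_le_sum fun i _ => ?_)
    by_cases h : x ∈ B i <;> simp [h]
  have hgi : ∀ n, Integrable g (P n) := fun n =>
    Integrable.of_bound hgm.aestronglyMeasurable C (Eventually.of_forall hC)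
  have hgi2 : ∀ n, Integrable (fun x => g x ^ 2) (P n) := fun n =>
    Integrable.of_bound (hgm.pow_const 2).aestronglyMeasurable (C ^ 2)
      (Eventually.of_forall fun x => by
        rw [Real.norm_eq_abs, abs_pow]
        exact pow_le_pow_left₀ (abs_nonneg _) (hC x) 2)
  -- convergence of measures of sets
  have hset : ∀ A : Set E, MeasurableSet A → μ A < ∞ →
      Tendsto (fun n : ℕ => ((n : ℝ) / a n) * (P n).real A) atTop (𝓝 (μ.real A)) := by
    intro A hA hAf
    have h := (ENNReal.tendsto_toReal hAf.ne).comp (hlim A hA)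
    refine h.congr' ?_
    filter_upwards [eventually_ge_atTop 1] with n hn
    have := hapos n hn
    simp only [Function.comp, ENNReal.toReal_mul, Measure.real]
    rw [ENNReal.toReal_ofReal (by positivity)]
  set M : ℕ → ℝ := fun n => ∫ x, g x ∂(P n) with hM
  have hmean : Tendsto (fun n : ℕ => ((n : ℝ) / a n) * M n) atTop (𝓝 (∫ x, g x ∂μ)) := by
    have : ∀ n, M n = ∑ i, (P n).real (B i) * c i := fun n => by
      rw [hM]; simp only [hgdef]
      exact aux_int (P n) c B hBmeas (fun i => measure_lt_top _ _)
    simp only [this]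
    rw [hgdef, aux_int μ c B hBmeas hBfin]
    simp only [Finset.mul_sum, ← mul_assoc]
    exact tendsto_finsetSum _ fun i _ => (hset (B i) (hBmeas i) (hBfin i)).mul_const _
  have hsq : Tendsto (fun n : ℕ => ((n : ℝ) / a n) * ∫ x, g x ^ 2 ∂(P n)) atTop
      (𝓝 (∫ x, g x ^ 2 ∂μ)) := by
    have : ∀ n, ∫ x, g x ^ 2 ∂(P n) = ∑ i, ∑ j, (P n).real (B i ∩ B j) * (c i * c j) := fun n => by
      simp only [hgdef]
      exact aux_int2 (P n) c B hBmeas (fun i => measure_lt_top _ _)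
    simp only [this]
    have h2 : ∫ x, g x ^ 2 ∂μ = ∑ i, ∑ j, μ.real (B i ∩ B j) * (c i * c j) := by
      simp only [hgdef]
      exact aux_int2 μ c B hBmeas hBfin
    rw [h2]
    simp only [Finset.mul_sum, ← mul_assoc]
    refine tendsto_finsetSum _ fun i _ => tendsto_finsetSum _ fun j _ => ?_
    exact ((hset (B i ∩ B j) ((hBmeas i).inter (hBmeas j))
      ((measure_mono Set.inter_subset_left).trans_lt (hBfin i))).mul_const _).mul_const _
  have hM0 : Tendsto M atTop (𝓝 0) := by
    have h := han.mul hmean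
    rw [zero_mul] at h
    refine h.congr' ?_
    filter_upwards [eventually_ge_atTop 1] with n hn
    have := hapos n hn
    have : (0:ℝ) < n := by exact_mod_cast hn
    field_simp
  set V : ℕ → ℝ := fun n => ∫ x, (g x - M n) ^ 2 ∂(P n) with hV
  have hVeq : ∀ n, V n = ∫ x, g x ^ 2 ∂(P n) - M n ^ 2 := by
    intro n
    have : ∀ x, (g x - M n) ^ 2 = g x ^ 2 - (2 * M n * g x - M n ^ 2) := fun x => by ring
    simp only [hV, this]
    have i3 : Integrable (fun x => 2 * M n * g x - M n ^ 2) (P n) :=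
      ((hgi n).const_mul _).sub (integrable_const _)
    rw [integral_sub (hgi2 n) i3,
      integral_sub ((hgi n).const_mul _) (integrable_const _), integral_const_mul]
    simp only [integral_const, probReal_univ, one_smul]
    change _ - (2 * M n * M n - _) = _
    ring
  have hVlim : Tendsto (fun n : ℕ => ((n : ℝ) / a n) * V n) atTop (𝓝 (∫ x, g x ^ 2 ∂μ)) := by
    have h := hsq.sub (hmean.mul hM0)
    rw [mul_zero, sub_zero] at h
    refine h.congr fun n => ?_
    rw [hVeq]; ring
  set σ2 : ℝ := ∫ x, g x ^ 2 ∂μ with hσ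
  have hσ0 : 0 ≤ σ2 := integral_nonneg fun x => sq_nonneg _
  have hMC : ∀ n, |M n| ≤ C := fun n => by
    have := norm_integral_le_of_norm_le_const (μ := P n) (f := g) (C := C) (Eventually.of_forall hC)
    simpa using this
  have hYb : ∀ n x, |g x - M n| ≤ 2 * C := fun n x => by
    have := abs_sub (g x) (M n)
    linarith [hC x, hMC n]
  set S : ℕ → Ω → ℝ := fun n ω => (Real.sqrt (a n))⁻¹ * ∑ j : Fin n, (g (X n j ω) - M n) with hS
  have hSm : ∀ n, Measurable (S n) := fun n =>
    (Finset.measurable_fun_sum _ fun j _ => (hgm.comp (hXmeas n j)).sub_const _).const_mul _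
  have hcf : ∀ n : ℕ, 1 ≤ n → ∀ t : ℝ, charFun (Pr.map (S n)) t =
      (∫ x, Complex.exp ((((Real.sqrt (a n))⁻¹ * t * (g x - M n) : ℝ) : ℂ) * Complex.I) ∂(P n)) ^ n := by
    intro n hn t
    have hYm : ∀ j, Measurable (fun ω => g (X n j ω) - M n) := fun j =>
      (hgm.comp (hXmeas n j)).sub_const _
    have hind : iIndepFun (fun (j : Fin n) ω => g (X n j ω) - M n) Pr :=
      (hXindep n).comp (fun _ x => g x - M n) (fun _ => hgm.sub_const _)
    rw [hS, charFun_map_mul_comp, hind.charFun_map_fun_sum_eq_prod (fun j => (hYm j).aemeasurable)]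
    · have : ∀ j : Fin n, charFun (Pr.map (fun ω => g (X n j ω) - M n)) ((Real.sqrt (a n))⁻¹ * t)
          = ∫ x, Complex.exp ((((Real.sqrt (a n))⁻¹ * t * (g x - M n) : ℝ) : ℂ) * Complex.I) ∂(P n) := by
        intro j
        rw [charFun_apply_real, integral_map (hYm j).aemeasurable (by fun_prop), ← hXlaw n hn j,
          integral_map (hXmeas n j).aemeasurable (by fun_prop)]
        simp
      simp [Finset.prod_apply, this]
    · exact Finset.aemeasurable_fun_sum _ fun j _ => (hYm j).aemeasurable
  have hprob : ∀ n, IsProbabilityMeasure (Pr.map (S n)) := fun n =>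
    Measure.isProbabilityMeasure_map (hSm n).aemeasurable
  have hsqrt : Tendsto (fun n => (Real.sqrt (a n))⁻¹) atTop (𝓝 0) :=
    tendsto_inv_atTop_zero.comp (Real.tendsto_sqrt_atTop.comp hatop)
  have key : Tendsto (β := ProbabilityMeasure ℝ) (fun n => ⟨Pr.map (S n), hprob n⟩) atTop
      (𝓝 ⟨gaussianReal 0 (Real.toNNReal σ2), inferInstance⟩) := by
    refine ProbabilityMeasure.tendsto_iff_tendsto_charFun.2 fun t => ?_
    change Tendsto (fun n => charFun (Pr.map (S n)) t) atTop
      (𝓝 (charFun (gaussianReal 0 (Real.toNNReal σ2)) t))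
    rw [charFun_gaussianReal]
    set G : ℕ → ℂ := fun n => (∫ x, Complex.exp ((((Real.sqrt (a n))⁻¹ * t * (g x - M n) : ℝ) : ℂ)
      * Complex.I) ∂(P n)) - 1 with hG
    have hmain : Tendsto (fun n : ℕ => (n : ℂ) * G n) atTop
        (𝓝 (((-(t ^ 2 / 2 * σ2) : ℝ)) : ℂ)) := by
      have hreal : Tendsto (fun n : ℕ => ((-(t ^ 2 / 2 * ((n : ℝ) / a n * V n)) : ℝ) : ℂ)) atTop
          (𝓝 (((-(t ^ 2 / 2 * σ2) : ℝ)) : ℂ)) :=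
        (Complex.continuous_ofReal.tendsto _).comp (hVlim.const_mul _).neg
      have hbd : Tendsto (fun n : ℕ => |t| ^ 3 * (2 * C) * ((Real.sqrt (a n))⁻¹ *
          ((n : ℝ) / a n * V n))) atTop (𝓝 0) := by
        have := (hsqrt.mul hVlim).const_mul (|t| ^ 3 * (2 * C))
        simpa using this
      have hu : ∀ᶠ n in atTop, |(Real.sqrt (a n))⁻¹ * t| * (2 * C) ≤ 1 := by
        have h : Tendsto (fun n => |(Real.sqrt (a n))⁻¹ * t| * (2 * C)) atTop (𝓝 0) := by
          simpa using ((hsqrt.mul_const t).abs).mul_const (2 * C)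
        exact (h.eventually (gt_mem_nhds one_pos)).mono fun n hn => hn.le
      have hdiff : Tendsto (fun n : ℕ => (n : ℂ) * G n -
          ((-(t ^ 2 / 2 * ((n : ℝ) / a n * V n)) : ℝ) : ℂ)) atTop (𝓝 0) := by
        refine squeeze_zero_norm' ?_ hbd
        filter_upwards [hu, eventually_ge_atTop 1] with n hn h1
        have hpos := hapos n h1
        have h0 : ∫ x, (g x - M n) ∂(P n) = 0 := by
          rw [integral_sub (hgi n) (integrable_const _)]; simp [hM]
        have hT := aux_taylor (P n) (fun x => g x - M n) (hgm.sub_const _) (2 * C) (hYb n) h0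
          ((Real.sqrt (a n))⁻¹ * t) hn
        have hs2 : (Real.sqrt (a n))⁻¹ ^ 2 = (a n)⁻¹ := by
          rw [inv_pow, Real.sq_sqrt hpos.le]
        have e : (n : ℂ) * G n - ((-(t ^ 2 / 2 * ((n : ℝ) / a n * V n)) : ℝ) : ℂ) =
            (n : ℂ) * ((∫ x, Complex.exp ((((Real.sqrt (a n))⁻¹ * t * (g x - M n) : ℝ) : ℂ)
              * Complex.I) ∂(P n)) - ((1 - ((Real.sqrt (a n))⁻¹ * t) ^ 2 / 2 * V n : ℝ) : ℂ)) := by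
          rw [mul_pow, hs2, hG]
          push_cast
          ring
        rw [e, norm_mul, Complex.norm_natCast]
        refine (mul_le_mul_of_nonneg_left hT (Nat.cast_nonneg n)).trans (le_of_eq ?_)
        change _ * (_ * V n) = _
        rw [abs_mul, abs_of_nonneg (by positivity : 0 ≤ (Real.sqrt (a n))⁻¹), div_eq_mul_inv,
          ← hs2]
        ring
      simpa using hdiff.add hreal
    have hpow := Complex.tendsto_one_add_pow_exp_of_tendsto hmain
    have hexp : Complex.exp ((t : ℂ) * ((0 : ℝ) : ℂ) * Complex.I -
        ((Real.toNNReal σ2 : ℝ) : ℂ) * (t : ℂ) ^ 2 / 2) =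
        Complex.exp (((-(t ^ 2 / 2 * σ2) : ℝ)) : ℂ) := by
      rw [Real.coe_toNNReal _ hσ0]
      congr 1
      push_cast
      ring
    rw [hexp]
    refine hpow.congr' ?_
    filter_upwards [eventually_ge_atTop 1] with n hn
    rw [hcf n hn t, hG]
    congr 1
    ring
  have hfin := (ProbabilityMeasure.tendsto_iff_forall_integral_tendsto.1 key) φ
  refine hfin.congr fun n => ?_
  exact integral_map (hSm n).aemeasurable φ.continuous.aestronglyMeasurable
end

section
/- Under Assumption 2.1, let k_1, k_2 ≥ 1, 0 ≤ l ≤ min(k_1, k_2), f ∈ L²(μ^{k_1}) and g ∈ L²(μ^{k_2}). Then for every n ≥ 1, |F_l^{(n)}(f,g)| ≤ ‖f‖_{L²(μ^{k_1})} · ‖g‖_{L²(μ^{k_2})}. -/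
open MeasureTheory Filter Topology
open scoped ENNReal NNReal

/-- Substitution of variables according to a diagram `(j1, j2)`. -/
noncomputable def subst {E : Type*} {k1 k2 l : ℕ} (j1 : Fin l ↪ Fin k1) (j2 : Fin l ↪ Fin k2)
    (x : Fin k1 → E) (z : Fin k2 → E) : Fin k2 → E :=
  fun i => if h : ∃ s, j2 s = i then x (j1 (Classical.choose h)) else z i

/-- The bilinear form `F_l^{(n)}(f, g)`: `c^{(k1+k2)/2}` (with `c = n / a n`) times the
average, over all diagrams with `l` edges (parametrized by pairs of injections, each
diagram being counted `l!` times), of `∫ (f ⊗ g)_{B(𝒩)} dP^{k1+k2-l}`; the integral of the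
identified function is realized on `E^{k1} × E^{k2}` with the `l` matched coordinates of
the second factor as dummy variables under the probability measure `P`. -/
noncomputable def Fln {E : Type*} [MeasurableSpace E] (P : Measure E) (c : ℝ)
    (k1 k2 l : ℕ) (f : (Fin k1 → E) → ℝ) (g : (Fin k2 → E) → ℝ) : ℝ :=
  Real.sqrt c ^ (k1 + k2) *
    (((Fintype.card (Fin l ↪ Fin k1) * Fintype.card (Fin l ↪ Fin k2) : ℕ) : ℝ))⁻¹ *
    ∑ j1 : Fin l ↪ Fin k1, ∑ j2 : Fin l ↪ Fin k2,
      ∫ q : (Fin k1 → E) × (Fin k2 → E), f q.1 * g (subst j1 j2 q.1 q.2)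
        ∂((Measure.pi fun _ : Fin k1 => P).prod (Measure.pi fun _ : Fin k2 => P))

theorem aux_smul_pi_le {E : Type*} [MeasurableSpace E] (μ P : Measure E) [IsProbabilityMeasure P]
    (c : ℝ≥0∞) (h : c • P ≤ μ) (k : ℕ) :
    c ^ k • (Measure.pi fun _ : Fin k => P) ≤ Measure.pi fun _ : Fin k => μ := by
  refine Measure.le_iff.2 fun s hs => ?_
  conv_rhs => rw [Measure.pi, toMeasure_apply _ _ hs]
  suffices (c ^ k • (Measure.pi fun _ : Fin k => P)).toOuterMeasure ≤
      OuterMeasure.pi fun _ : Fin k => μ.toOuterMeasure from this s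
  rw [OuterMeasure.le_pi]
  intro t _
  have h1 : (c ^ k • (Measure.pi fun _ : Fin k => P)) (Set.univ.pi t) = ∏ i, (c • P) (t i) := by
    simp [Measure.smul_apply, Measure.pi_pi, Finset.prod_mul_distrib]
  change (c ^ k • (Measure.pi fun _ : Fin k => P)) (Set.univ.pi t) ≤ ∏ i, μ (t i)
  rw [h1]
  exact Finset.prod_le_prod' fun i _ => h (t i)

theorem aux_reindex {E ι κ : Type*} [Fintype ι] [Fintype κ] [MeasurableSpace E] (P : Measure E)
    [IsProbabilityMeasure P] (r : ι → κ) (hr : Function.Injective r) :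
    MeasurePreserving (fun (x : κ → E) (i : ι) => x (r i)) (Measure.pi fun _ => P)
      (Measure.pi fun _ => P) := by
  have hm : Measurable (fun (x : κ → E) (i : ι) => x (r i)) := by fun_prop
  refine ⟨hm, ?_⟩
  refine (Measure.pi_eq fun s hs => ?_).symm
  rw [Measure.map_apply hm (MeasurableSet.univ_pi hs)]
  have h1 : (fun (x : κ → E) (i : ι) => x (r i)) ⁻¹' (Set.univ.pi s) =
      Set.univ.pi fun j => {y | ∀ i, r i = j → y ∈ s i} := by
    ext x
    simp only [Set.mem_preimage, Set.mem_univ_pi, Set.mem_ofPred_eq]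
    exact ⟨fun h j i hi => hi ▸ h i, fun h i => h _ i rfl⟩
  rw [h1, Measure.pi_pi]
  refine (Fintype.prod_of_injective r hr _ _ ?_ ?_).symm
  · intro j hj
    have : {y | ∀ i, r i = j → y ∈ s i} = Set.univ := by
      ext y
      simp only [Set.mem_ofPred_eq, Set.mem_univ, iff_true]
      exact fun i hi => absurd ⟨i, hi⟩ hj
    rw [this, measure_univ]
  · intro i
    congr 1
    ext y
    simp only [Set.mem_ofPred_eq]
    exact ⟨fun h i' hi' => hr hi' ▸ h, fun h => h i rfl⟩

theorem aux_subst {E : Type*} [MeasurableSpace E] (P : Measure E) [IsProbabilityMeasure P]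
    {k1 k2 l : ℕ} (j1 : Fin l ↪ Fin k1) (j2 : Fin l ↪ Fin k2) :
    MeasurePreserving (fun q : (Fin k1 → E) × (Fin k2 → E) => subst j1 j2 q.1 q.2)
      ((Measure.pi fun _ : Fin k1 => P).prod (Measure.pi fun _ : Fin k2 => P))
      (Measure.pi fun _ : Fin k2 => P) := by
  classical
  let r : Fin k2 → Fin k1 ⊕ Fin k2 := fun i =>
    if h : ∃ s, j2 s = i then Sum.inl (j1 (Classical.choose h)) else Sum.inr i
  have hr : Function.Injective r := by
    intro i i' h
    by_cases h1 : ∃ s, j2 s = i <;> by_cases h2 : ∃ s, j2 s = i'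
    · simp only [r, dif_pos h1, dif_pos h2, Sum.inl.injEq, EmbeddingLike.apply_eq_iff_eq] at h
      rw [← Classical.choose_spec h1, ← Classical.choose_spec h2, h]
    · simp [r, dif_pos h1, dif_neg h2] at h
    · simp [r, dif_neg h1, dif_pos h2] at h
    · simpa only [r, dif_neg h1, dif_neg h2, Sum.inr.injEq] using h
  have := (aux_reindex P r hr).comp
    (measurePreserving_sumPiEquivProdPi_symm (X := fun _ : Fin k1 ⊕ Fin k2 => E) (fun _ => P))
  convert this using 1
  ext q i
  by_cases h1 : ∃ s, j2 s = i
  · simp only [subst, Function.comp, r, dif_pos h1]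
    rfl
  · simp only [subst, Function.comp, r, dif_neg h1]
    rfl

theorem aux_norm {E : Type*} [MeasurableSpace E] (μ P : Measure E) [IsProbabilityMeasure P]
    (c : ℝ) (hc : 0 < c) (h : ENNReal.ofReal c • P ≤ μ) (k : ℕ) (f : (Fin k → E) → ℝ)
    (hf : MemLp f 2 (Measure.pi fun _ : Fin k => μ)) :
    MemLp f 2 (Measure.pi fun _ : Fin k => P) ∧
    Real.sqrt c ^ k * (eLpNorm f 2 (Measure.pi fun _ : Fin k => P)).toReal ≤
      (eLpNorm f 2 (Measure.pi fun _ : Fin k => μ)).toReal := by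
  have hle := aux_smul_pi_le μ P _ h k
  have hc0 : ENNReal.ofReal c ^ k ≠ 0 := pow_ne_zero _ (by simpa using hc)
  have hct : ENNReal.ofReal c ^ k ≠ ∞ := ENNReal.pow_ne_top ENNReal.ofReal_ne_top
  refine ⟨?_, ?_⟩
  · have h1 := (hf.mono_measure hle).smul_measure (c := (ENNReal.ofReal c ^ k)⁻¹)
      (ENNReal.inv_ne_top.2 hc0)
    rwa [smul_smul, ENNReal.inv_mul_cancel hc0 hct, one_smul] at h1
  · have h2 := ENNReal.toReal_mono hf.eLpNorm_ne_top (eLpNorm_mono_measure f hle)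
    rw [eLpNorm_smul_measure_of_ne_top (by simp), smul_eq_mul, ENNReal.toReal_mul,
      ← ENNReal.toReal_rpow, ENNReal.toReal_pow, ENNReal.toReal_ofReal hc.le] at h2
    convert h2 using 2
    rw [Real.sqrt_eq_rpow, ← Real.rpow_natCast, ← Real.rpow_natCast, ← Real.rpow_mul hc.le,
      ← Real.rpow_mul hc.le, mul_comm]
    simp

theorem aux_cs {Ω : Type*} [MeasurableSpace Ω] (ν : Measure Ω) (f g : Ω → ℝ)
    (hf : MemLp f 2 ν) (hg : MemLp g 2 ν) :
    |∫ q, f q * g q ∂ν| ≤ (eLpNorm f 2 ν).toReal * (eLpNorm g 2 ν).toReal := by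
  have h1 := eLpNorm_smul_le_mul_eLpNorm (p := 2) (q := 2) (r := 1) hg.1 hf.1
  rw [← ENNReal.toReal_mul, ← Real.norm_eq_abs, ← toReal_enorm]
  refine ENNReal.toReal_mono (ENNReal.mul_ne_top hf.eLpNorm_ne_top hg.eLpNorm_ne_top) ?_
  refine (enorm_integral_le_lintegral_enorm _).trans ?_
  rw [eLpNorm_one_eq_lintegral_enorm] at h1
  exact h1

/-- Under Assumption 2.1, `|F_l^{(n)}(f,g)| ≤ ‖f‖_{L²(μ^{k1})} ‖g‖_{L²(μ^{k2})}`
for every `n ≥ 1`. -/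
theorem abs_Fln_le
    {E : Type*} [MeasurableSpace E] (μ : Measure E) [SigmaFinite μ] [NullSingletonClass μ]
    (a : ℕ → ℝ) (P : ℕ → Measure E) [∀ n, IsProbabilityMeasure (P n)]
    (h21 : Assumption21 μ a P)
    (k1 k2 l : ℕ) (hk1 : 1 ≤ k1) (hk2 : 1 ≤ k2) (hl1 : l ≤ k1) (hl2 : l ≤ k2)
    (f : (Fin k1 → E) → ℝ) (g : (Fin k2 → E) → ℝ)
    (hf : MemLp f 2 (Measure.pi fun _ : Fin k1 => μ))
    (hg : MemLp g 2 (Measure.pi fun _ : Fin k2 => μ))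
    (n : ℕ) (hn : 1 ≤ n) :
    |Fln (P n) ((n : ℝ) / a n) k1 k2 l f g| ≤
      (eLpNorm f 2 (Measure.pi fun _ : Fin k1 => μ)).toReal *
        (eLpNorm g 2 (Measure.pi fun _ : Fin k2 => μ)).toReal := by
  obtain ⟨-, ha, -, -, hmono, hlim⟩ := h21
  have hc : 0 < (n : ℝ) / a n := div_pos (by exact_mod_cast hn) (ha n hn)
  set c : ℝ := (n : ℝ) / a n with hcdef
  have hle : ENNReal.ofReal c • P n ≤ μ := by
    refine Measure.le_iff.2 fun B hB => ?_
    rw [Measure.smul_apply, smul_eq_mul]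
    refine ge_of_tendsto (hlim B hB) ?_
    filter_upwards [eventually_ge_atTop n] with m hm
    induction m, hm using Nat.le_induction with
    | base => exact le_rfl
    | succ m hm ih =>
      refine ih.trans ?_
      have := hmono B hB m (hn.trans hm)
      push_cast
      exact this
  obtain ⟨hfP, hf2⟩ := aux_norm μ (P n) c hc hle k1 f hf
  obtain ⟨hgP, hg2⟩ := aux_norm μ (P n) c hc hle k2 g hg
  set A := (eLpNorm f 2 (Measure.pi fun _ : Fin k1 => P n)).toReal with hA
  set B := (eLpNorm g 2 (Measure.pi fun _ : Fin k2 => P n)).toReal with hB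
  have key : ∀ (j1 : Fin l ↪ Fin k1) (j2 : Fin l ↪ Fin k2),
      |∫ q : (Fin k1 → E) × (Fin k2 → E), f q.1 * g (subst j1 j2 q.1 q.2)
        ∂((Measure.pi fun _ : Fin k1 => P n).prod (Measure.pi fun _ : Fin k2 => P n))| ≤
        A * B := by
    intro j1 j2
    have m1 : MeasurePreserving (Prod.fst : (Fin k1 → E) × (Fin k2 → E) → _)
        ((Measure.pi fun _ : Fin k1 => P n).prod (Measure.pi fun _ : Fin k2 => P n))
        (Measure.pi fun _ : Fin k1 => P n) := measurePreserving_fst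
    have m2 := aux_subst (P n) j1 j2
    have := aux_cs _ _ _ (hfP.comp_measurePreserving m1) (hgP.comp_measurePreserving m2)
    rwa [eLpNorm_comp_measurePreserving hfP.1 m1, eLpNorm_comp_measurePreserving hgP.1 m2] at this
  have hAB : 0 ≤ A * B := mul_nonneg ENNReal.toReal_nonneg ENNReal.toReal_nonneg
  set N : ℕ := Fintype.card (Fin l ↪ Fin k1) * Fintype.card (Fin l ↪ Fin k2) with hN
  have hsum : |∑ j1 : Fin l ↪ Fin k1, ∑ j2 : Fin l ↪ Fin k2,
      ∫ q : (Fin k1 → E) × (Fin k2 → E), f q.1 * g (subst j1 j2 q.1 q.2)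
        ∂((Measure.pi fun _ : Fin k1 => P n).prod (Measure.pi fun _ : Fin k2 => P n))| ≤
      (N : ℝ) * (A * B) := by
    refine (Finset.abs_sum_le_sum_abs _ _).trans ?_
    refine (Finset.sum_le_sum fun j1 _ => (Finset.abs_sum_le_sum_abs _ _).trans
      (Finset.sum_le_sum fun j2 _ => key j1 j2)).trans ?_
    simp only [Finset.sum_const, Finset.card_univ, nsmul_eq_mul, hN, Nat.cast_mul]
    rw [mul_assoc]
  have hs : 0 ≤ Real.sqrt c := Real.sqrt_nonneg c
  rw [Fln, abs_mul, abs_of_nonneg (by positivity)]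
  calc _ ≤ Real.sqrt c ^ (k1 + k2) * (N : ℝ)⁻¹ * ((N : ℝ) * (A * B)) := by gcongr
    _ = Real.sqrt c ^ (k1 + k2) * (A * B) * ((N : ℝ)⁻¹ * (N : ℝ)) := by ring
    _ ≤ Real.sqrt c ^ (k1 + k2) * (A * B) * 1 := by
      gcongr
      exact inv_mul_le_one
    _ = (Real.sqrt c ^ k1 * A) * (Real.sqrt c ^ k2 * B) := by ring
    _ ≤ _ := by gcongr
end

section
/- Under Assumption 2.1, let k_1, k_2 ≥ 1, f ∈ L²(μ^{k_1}) and g ∈ L²(μ^{k_2}). If either (i) k_1 ≠ k_2 and 0 ≤ l ≤ min(k_1, k_2), or (ii) k_1 = k_2 and 0 ≤ l < k_1, then F_l^{(n)}(f,g) → 0 as n → ∞. -/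
open MeasureTheory Filter Topology
open scoped ENNReal NNReal

section helpers

variable {E : Type*} [MeasurableSpace E]

lemma aux_pi_le {k : Type*} [Fintype k] (P μ : Measure E) [IsProbabilityMeasure P] (C : ℝ≥0∞)
    (hle : ∀ B, MeasurableSet B → C * P B ≤ μ B) :
    C ^ (Fintype.card k) • (Measure.pi fun _ : k => P) ≤ Measure.pi fun _ : k => μ := by
  have hle' : C • P ≤ μ := Measure.le_iff.2 (fun B hB => by simpa using hle B hB)
  refine Measure.le_iff.2 fun s hs => ?_
  rw [Measure.pi_def (fun _ : k => μ), toMeasure_apply _ _ hs]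
  have : (C ^ (Fintype.card k) • (Measure.pi fun _ : k => P)).toOuterMeasure ≤
      OuterMeasure.pi fun _ : k => μ.toOuterMeasure := by
    rw [OuterMeasure.le_pi]
    intro s _
    have : ((C ^ (Fintype.card k) • (Measure.pi fun _ : k => P)).toOuterMeasure) (Set.univ.pi s)
      = ∏ i, (C • P) (s i) := by
      simp [Measure.pi_pi, Finset.prod_mul_distrib]
    rw [this]
    exact Finset.prod_le_prod' fun i _ => hle' (s i)
  exact this s

lemma aux_mp {κ ι : Type*} [Fintype κ] [Fintype ι] (P : Measure E) [IsProbabilityMeasure P]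
    (σ : ι → κ) (hσ : Function.Injective σ) :
    MeasurePreserving (fun (w : κ → E) i => w (σ i)) (Measure.pi fun _ => P)
      (Measure.pi fun _ => P) := by
  refine ⟨by fun_prop, ?_⟩
  have h1 := ProbabilityTheory.iIndepFun_pi (μ := fun _ : κ => P) (X := fun _ => id)
    (fun _ => aemeasurable_id)
  have h2 := h1.precomp hσ
  have h3 := h2.map_fun_eq_pi_map (fun i => (measurable_id.comp (measurable_pi_apply (σ i))).aemeasurable)
  refine h3.trans ?_
  congr 1
  ext1 i
  exact (measurePreserving_eval (fun _ : κ => P) (σ i)).map_eq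

lemma aux_indep {κ ι : Type*} [Fintype κ] [Fintype ι] (P : Measure E) [IsProbabilityMeasure P]
    (σ : ι → κ) (hσ : Function.Injective σ) (i0 : κ) (hi : ∀ j, σ j ≠ i0)
    (A : Set E) (hA : MeasurableSet A) (G : (ι → E) → ℝ≥0∞) (hG : Measurable G) :
    ∫⁻ w : κ → E, A.indicator 1 (w i0) * G (fun i => w (σ i)) ∂(Measure.pi fun _ => P)
      = P A * ∫⁻ y, G y ∂(Measure.pi fun _ => P) := by
  let τ : Unit ⊕ ι → κ := Sum.elim (fun _ => i0) σ
  have hτ : Function.Injective τ := by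
    rintro (a | a) (b | b) h
    · rfl
    · exact absurd h.symm (hi b)
    · exact absurd h (hi a)
    · exact congrArg _ (hσ h)
  have h1 := aux_mp P τ hτ
  have h2 := (measurePreserving_sumPiEquivProdPi (fun _ : Unit ⊕ ι => P)).comp h1
  have hm : Measurable (A.indicator (1 : E → ℝ≥0∞)) := measurable_one.indicator hA
  have h3 := h2.lintegral_comp (f := fun q => A.indicator 1 (q.1 ()) * G q.2) (by fun_prop)
  refine Eq.trans ?_ (h3.trans ?_)
  · rfl
  · rw [lintegral_prod_mul (f := fun u : Unit → E => A.indicator 1 (u ()))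
      (hm.comp (measurable_pi_apply ())).aemeasurable (by fun_prop)]
    congr 1
    rw [(measurePreserving_eval (fun _ : Unit => P) ()).lintegral_comp
      (f := A.indicator 1) hm]
    simp [hA]

lemma aux_cs_s11 {Ω : Type*} [MeasurableSpace Ω] (ν : Measure Ω) (F G : Ω → ℝ≥0∞)
    (hF : AEMeasurable F ν) (hG : AEMeasurable G ν) :
    ∫⁻ w, F w * G w ∂ν ≤ (∫⁻ w, F w ^ 2 ∂ν) ^ (1 / 2 : ℝ) * (∫⁻ w, G w ^ 2 ∂ν) ^ (1 / 2 : ℝ) := by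
  have := ENNReal.lintegral_mul_le_Lp_mul_Lq ν Real.HolderConjugate.two_two hF hG
  simpa using this

lemma aux_cs' {Ω : Type*} [MeasurableSpace Ω] (ν : Measure Ω) (D : ℝ≥0∞) (k1 k2 : ℕ)
    (F G : Ω → ℝ≥0∞) (hF : AEMeasurable F ν) (hG : AEMeasurable G ν) :
    D ^ (k1 + k2) * ∫⁻ w, F w * G w ∂ν ≤ (D ^ k1 * (∫⁻ w, F w ^ 2 ∂ν) ^ (1 / 2 : ℝ)) *
      (D ^ k2 * (∫⁻ w, G w ^ 2 ∂ν) ^ (1 / 2 : ℝ)) := by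
  refine (mul_le_mul' le_rfl (aux_cs_s11 ν F G hF hG)).trans (le_of_eq ?_)
  rw [pow_add]; ring

lemma aux_scale (D I : ℝ≥0∞) (k : ℕ) :
    D ^ k * I ^ (1 / 2 : ℝ) = ((D ^ 2) ^ k * I) ^ (1 / 2 : ℝ) := by
  rw [ENNReal.mul_rpow_of_nonneg _ _ (by norm_num)]
  congr 1
  rw [← pow_mul, mul_comm 2 k, pow_mul, ← ENNReal.rpow_natCast (D ^ k) 2, ← ENNReal.rpow_mul]
  simp

lemma aux_int_le {k : ℕ} (P μ : Measure E) [IsProbabilityMeasure P] (C : ℝ≥0∞)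
    (hle : ∀ B, MeasurableSet B → C * P B ≤ μ B) (F : (Fin k → E) → ℝ≥0∞) :
    C ^ k * ∫⁻ x, F x ∂(Measure.pi fun _ => P) ≤ ∫⁻ x, F x ∂(Measure.pi fun _ => μ) := by
  have h := aux_pi_le (k := Fin k) P μ C hle
  rw [Fintype.card_fin] at h
  calc _ = ∫⁻ x, F x ∂(C ^ k • (Measure.pi fun _ => P)) := by rw [lintegral_smul_measure]; rfl
    _ ≤ _ := lintegral_mono' h le_rfl

lemma aux_core {κ : Type*} [Fintype κ] {k1 k2 : ℕ} (P μ : Measure E) [IsProbabilityMeasure P]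
    (D : ℝ≥0∞) (hle : ∀ B, MeasurableSet B → D ^ 2 * P B ≤ μ B)
    (σ1 : Fin k1 → κ) (h1 : Function.Injective σ1)
    (σ2 : Fin k2 → κ) (h2 : Function.Injective σ2) (i0 : Fin k1) (hi : ∀ j, σ2 j ≠ σ1 i0)
    (A : Set E) (hA : MeasurableSet A)
    (F : (Fin k1 → E) → ℝ≥0∞) (hF : Measurable F) (G : (Fin k2 → E) → ℝ≥0∞) (hG : Measurable G) :
    D ^ (k1 + k2) * ∫⁻ w : κ → E, F (fun i => w (σ1 i)) * G (fun i => w (σ2 i))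
        ∂(Measure.pi fun _ => P)
      ≤ (∫⁻ x, F x ^ 2 ∂(Measure.pi fun _ => μ)) ^ (1 / 2 : ℝ) *
          (P A * ∫⁻ y, G y ^ 2 ∂(Measure.pi fun _ => μ)) ^ (1 / 2 : ℝ)
        + (∫⁻ x, Aᶜ.indicator 1 (x i0) * F x ^ 2 ∂(Measure.pi fun _ => μ)) ^ (1 / 2 : ℝ) *
          (∫⁻ y, G y ^ 2 ∂(Measure.pi fun _ => μ)) ^ (1 / 2 : ℝ) := by
  have hm : Measurable (A.indicator (1 : E → ℝ≥0∞)) := measurable_one.indicator hA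
  have hm' : Measurable (Aᶜ.indicator (1 : E → ℝ≥0∞)) := measurable_one.indicator hA.compl
  set ν : Measure (κ → E) := Measure.pi fun _ => P
  have hsplit : ∫⁻ w : κ → E, F (fun i => w (σ1 i)) * G (fun i => w (σ2 i)) ∂ν
      = ∫⁻ w : κ → E, F (fun i => w (σ1 i)) *
          (A.indicator 1 (w (σ1 i0)) * G (fun i => w (σ2 i))) ∂ν
        + ∫⁻ w : κ → E, (Aᶜ.indicator 1 (w (σ1 i0)) * F (fun i => w (σ1 i))) *
           G (fun i => w (σ2 i)) ∂ν := by
    rw [← lintegral_add_left (by fun_prop)]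
    refine lintegral_congr fun w => ?_
    by_cases h : w (σ1 i0) ∈ A <;> simp [h]
  have hsqA : ∀ x, (A.indicator (1 : E → ℝ≥0∞) x) ^ 2 = A.indicator 1 x := by
    intro x; by_cases h : x ∈ A <;> simp [h]
  have hsqA' : ∀ x, (Aᶜ.indicator (1 : E → ℝ≥0∞) x) ^ 2 = Aᶜ.indicator 1 x := by
    intro x; by_cases h : x ∈ A <;> simp [h]
  rw [hsplit, mul_add]
  have m1 : Measurable fun w : κ → E => F (fun i => w (σ1 i)) := by fun_prop
  have m2 : Measurable fun w : κ → E => G (fun i => w (σ2 i)) := by fun_prop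
  have m3 : Measurable fun w : κ → E => A.indicator (1 : E → ℝ≥0∞) (w (σ1 i0)) := by fun_prop
  have m4 : Measurable fun w : κ → E => Aᶜ.indicator (1 : E → ℝ≥0∞) (w (σ1 i0)) := by fun_prop
  have e1 : ∫⁻ w : κ → E, F (fun i => w (σ1 i)) ^ 2 ∂ν = ∫⁻ x, F x ^ 2 ∂(Measure.pi fun _ => P) :=
    (aux_mp P σ1 h1).lintegral_comp (f := fun x => F x ^ 2) (by fun_prop)
  have e2 : ∫⁻ w : κ → E, G (fun i => w (σ2 i)) ^ 2 ∂ν = ∫⁻ x, G x ^ 2 ∂(Measure.pi fun _ => P) :=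
    (aux_mp P σ2 h2).lintegral_comp (f := fun x => G x ^ 2) (by fun_prop)
  have e3 : ∫⁻ w : κ → E, (Aᶜ.indicator 1 (w (σ1 i0)) * F (fun i => w (σ1 i))) ^ 2 ∂ν
      = ∫⁻ x, Aᶜ.indicator 1 (x i0) * F x ^ 2 ∂(Measure.pi fun _ => P) := by
    simp_rw [mul_pow, hsqA']
    exact (aux_mp P σ1 h1).lintegral_comp (f := fun x => Aᶜ.indicator 1 (x i0) * F x ^ 2)
      (by fun_prop)
  have e4 : ∫⁻ w : κ → E, (A.indicator 1 (w (σ1 i0)) * G (fun i => w (σ2 i))) ^ 2 ∂ν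
      = P A * ∫⁻ x, G x ^ 2 ∂(Measure.pi fun _ => P) := by
    simp_rw [mul_pow, hsqA]
    exact aux_indep P σ2 h2 (σ1 i0) hi A hA (fun y => G y ^ 2) (by fun_prop)
  refine add_le_add ?_ ?_
  · refine (aux_cs' ν D k1 k2 _ _ m1.aemeasurable (m3.mul m2).aemeasurable).trans ?_
    simp only [Pi.mul_apply]
    rw [e1, e4, aux_scale, aux_scale, mul_left_comm ((D ^ 2) ^ k2)]
    gcongr <;> exact aux_int_le P μ _ hle _
  · refine (aux_cs' ν D k1 k2 _ _ (m4.mul m1).aemeasurable m2.aemeasurable).trans ?_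
    simp only [Pi.mul_apply]
    rw [e2, e3, aux_scale, aux_scale]
    gcongr <;> exact aux_int_le P μ _ hle _

lemma aux_tail {k : ℕ} (μ : Measure E) [SigmaFinite μ] (i0 : Fin k)
    (F : (Fin k → E) → ℝ≥0∞) (hF : Measurable F)
    (hfin : ∫⁻ x, F x ^ 2 ∂(Measure.pi fun _ => μ) ≠ ∞) :
    Tendsto (fun N => ∫⁻ x, (spanningSets μ N)ᶜ.indicator 1 (x i0) * F x ^ 2
      ∂(Measure.pi fun _ => μ)) atTop (𝓝 0) := by
  have := tendsto_lintegral_of_dominated_convergence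
    (μ := Measure.pi fun _ : Fin k => μ)
    (F := fun N x => (spanningSets μ N)ᶜ.indicator 1 (x i0) * F x ^ 2) (f := fun _ => 0)
    (fun x => F x ^ 2) (fun N => ?_) (fun N => ?_) hfin ?_
  · simpa using this
  · have : Measurable ((spanningSets μ N)ᶜ.indicator (1 : E → ℝ≥0∞)) :=
      measurable_one.indicator (measurableSet_spanningSets μ N).compl
    fun_prop
  · refine Eventually.of_forall fun x => ?_
    by_cases h : x i0 ∈ spanningSets μ N <;> simp [h]
  · refine Eventually.of_forall fun x => ?_
    refine tendsto_const_nhds.congr' ?_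
    filter_upwards [eventually_ge_atTop (spanningSetsIndex μ (x i0))] with N hN
    have : x i0 ∈ spanningSets μ N := mem_spanningSets_of_index_le μ _ hN
    simp [this]

lemma aux_tendsto {κ : Type*} [Fintype κ] {k1 k2 : ℕ} (μ : Measure E) [SigmaFinite μ]
    (P : ℕ → Measure E) [∀ n, IsProbabilityMeasure (P n)]
    (D : ℕ → ℝ≥0∞) (hle : ∀ᶠ n in atTop, ∀ B, MeasurableSet B → D n ^ 2 * P n B ≤ μ B)
    (hP : ∀ A, MeasurableSet A → μ A ≠ ∞ → Tendsto (fun n => P n A) atTop (𝓝 0))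
    (σ1 : Fin k1 → κ) (h1 : Function.Injective σ1)
    (σ2 : Fin k2 → κ) (h2 : Function.Injective σ2) (i0 : Fin k1) (hi : ∀ j, σ2 j ≠ σ1 i0)
    (F : (Fin k1 → E) → ℝ≥0∞) (hF : Measurable F) (G : (Fin k2 → E) → ℝ≥0∞) (hG : Measurable G)
    (hF2 : ∫⁻ x, F x ^ 2 ∂(Measure.pi fun _ => μ) ≠ ∞)
    (hG2 : ∫⁻ x, G x ^ 2 ∂(Measure.pi fun _ => μ) ≠ ∞) :
    Tendsto (fun n => D n ^ (k1 + k2) *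
      ∫⁻ w : κ → E, F (fun i => w (σ1 i)) * G (fun i => w (σ2 i)) ∂(Measure.pi fun _ => P n))
      atTop (𝓝 0) := by
  rw [ENNReal.tendsto_nhds_zero]
  intro ε hε
  have hε2 : 0 < ε / 2 := ENNReal.half_pos hε.ne'
  have half : (0:ℝ) < 1 / 2 := by norm_num
  have t1 : Tendsto (fun N => (∫⁻ x, (spanningSets μ N)ᶜ.indicator 1 (x i0) * F x ^ 2
      ∂(Measure.pi fun _ => μ)) ^ (1 / 2 : ℝ) *
      (∫⁻ y, G y ^ 2 ∂(Measure.pi fun _ => μ)) ^ (1 / 2 : ℝ)) atTop (𝓝 0) := by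
    have := (aux_tail μ i0 F hF hF2).ennrpow_const (1 / 2 : ℝ)
    rw [ENNReal.zero_rpow_of_pos half] at this
    have := ENNReal.Tendsto.mul_const this
      (b := (∫⁻ y, G y ^ 2 ∂(Measure.pi fun _ => μ)) ^ (1 / 2 : ℝ))
      (Or.inr (ENNReal.rpow_ne_top_of_nonneg half.le hG2))
    simpa using this
  obtain ⟨N, hN⟩ := ((ENNReal.tendsto_nhds_zero.1 t1) (ε / 2) hε2).exists
  have t2 : Tendsto (fun n => (∫⁻ x, F x ^ 2 ∂(Measure.pi fun _ => μ)) ^ (1 / 2 : ℝ) *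
      (P n (spanningSets μ N) * ∫⁻ y, G y ^ 2 ∂(Measure.pi fun _ => μ)) ^ (1 / 2 : ℝ))
      atTop (𝓝 0) := by
    have a1 := hP _ (measurableSet_spanningSets μ N) (measure_spanningSets_lt_top μ N).ne
    have a2 := ENNReal.Tendsto.mul_const a1
      (b := (∫⁻ y, G y ^ 2 ∂(Measure.pi fun _ => μ))) (Or.inr hG2)
    rw [zero_mul] at a2
    have a3 := a2.ennrpow_const (1 / 2 : ℝ)
    rw [ENNReal.zero_rpow_of_pos half] at a3
    have a4 := ENNReal.Tendsto.const_mul a3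
      (a := (∫⁻ y, F y ^ 2 ∂(Measure.pi fun _ => μ)) ^ (1 / 2 : ℝ))
      (Or.inr (ENNReal.rpow_ne_top_of_nonneg half.le hF2))
    simpa using a4
  filter_upwards [(ENNReal.tendsto_nhds_zero.1 t2) (ε / 2) hε2, hle] with n hn hlen
  refine (aux_core (P n) μ (D n) hlen σ1 h1 σ2 h2 i0 hi _ (measurableSet_spanningSets μ N)
    F hF G hG).trans ?_
  calc _ ≤ ε / 2 + ε / 2 := add_le_add hn hN
    _ = ε := ENNReal.add_halves ε


lemma aux_le {μ : Measure E} {a : ℕ → ℝ} {P : ℕ → Measure E} (h21 : Assumption21 μ a P)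
    (n : ℕ) (hn : 1 ≤ n) (B : Set E) (hB : MeasurableSet B) :
    ENNReal.ofReal ((n : ℝ) / a n) * P n B ≤ μ B := by
  obtain ⟨-, -, -, -, hmono, hlim⟩ := h21
  refine ge_of_tendsto (hlim B hB) ?_
  filter_upwards [eventually_ge_atTop n] with m hm
  induction m, hm using Nat.le_induction with
  | base => exact le_rfl
  | succ m hm ih =>
    refine ih.trans ?_
    have := hmono B hB m (hn.trans hm)
    push_cast
    exact this

lemma aux_c_tendsto {μ : Measure E} {a : ℕ → ℝ} {P : ℕ → Measure E} (h21 : Assumption21 μ a P) :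
    Tendsto (fun n : ℕ => ENNReal.ofReal ((n : ℝ) / a n)) atTop (𝓝 ∞) := by
  obtain ⟨-, hpos, -, h0, -, -⟩ := h21
  apply ENNReal.tendsto_ofReal_nhds_top.2
  have h1 : Tendsto (fun n : ℕ => a n / n) atTop (𝓝[>] 0) := by
    refine tendsto_nhdsWithin_iff.2 ⟨h0, ?_⟩
    filter_upwards [eventually_ge_atTop 1] with n hn
    exact div_pos (hpos n hn) (by exact_mod_cast hn)
  refine h1.inv_tendsto_nhdsGT_zero.congr fun n => ?_
  simp

lemma aux_P_tendsto {μ : Measure E} {a : ℕ → ℝ} {P : ℕ → Measure E} (h21 : Assumption21 μ a P)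
    (A : Set E) (hA : MeasurableSet A) (hfin : μ A ≠ ∞) :
    Tendsto (fun n => P n A) atTop (𝓝 0) := by
  have hc := aux_c_tendsto h21
  have h1 : Tendsto (fun n : ℕ => μ A / ENNReal.ofReal ((n : ℝ) / a n)) atTop (𝓝 0) := by
    have := ENNReal.Tendsto.const_div hc (a := μ A) (Or.inr hfin)
    simpa using this
  refine tendsto_of_tendsto_of_tendsto_of_le_of_le' tendsto_const_nhds h1
    (Eventually.of_forall fun _ => zero_le) ?_
  filter_upwards [eventually_ge_atTop 1, hc.eventually (eventually_gt_nhds ENNReal.zero_lt_top)]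
    with n hn hn0
  rw [ENNReal.le_div_iff_mul_le (Or.inl hn0.ne') (Or.inl ENNReal.ofReal_ne_top), mul_comm]
  exact aux_le h21 n hn A hA

lemma aux_ac {k : ℕ} (P μ : Measure E) [IsProbabilityMeasure P] (C : ℝ≥0∞) (hC : C ≠ 0)
    (hle : ∀ B, MeasurableSet B → C * P B ≤ μ B) :
    (Measure.pi fun _ : Fin k => P) ≪ Measure.pi fun _ : Fin k => μ := by
  have h := aux_pi_le (k := Fin k) P μ C hle
  refine Measure.AbsolutelyContinuous.trans ?_ (Measure.absolutelyContinuous_of_le h)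
  exact Measure.absolutelyContinuous_smul (pow_ne_zero _ hC)

lemma aux_sq {Ω : Type*} [MeasurableSpace Ω] {ν : Measure Ω} {f : Ω → ℝ} (hf : MemLp f 2 ν) :
    ∫⁻ x, ‖f x‖ₑ ^ 2 ∂ν ≠ ∞ := by
  have h := lintegral_rpow_enorm_lt_top_of_eLpNorm_lt_top (by norm_num) (by norm_num) hf.2
  simpa using h.ne

end helpers


/-- Under Assumption 2.1, if either `k1 ≠ k2` and `0 ≤ l ≤ min k1 k2`, or
`k1 = k2` and `0 ≤ l < k1`, then `F_l^{(n)}(f, g) → 0` as `n → ∞`. -/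
theorem Fln_tendsto_zero
    {E : Type*} [MeasurableSpace E] (μ : Measure E) [SigmaFinite μ] [NullSingletonClass μ]
    (a : ℕ → ℝ) (P : ℕ → Measure E) [∀ n, IsProbabilityMeasure (P n)]
    (h21 : Assumption21 μ a P)
    (k1 k2 l : ℕ) (hk1 : 1 ≤ k1) (hk2 : 1 ≤ k2)
    (f : (Fin k1 → E) → ℝ) (g : (Fin k2 → E) → ℝ)
    (hf : MemLp f 2 (Measure.pi fun _ : Fin k1 => μ))
    (hg : MemLp g 2 (Measure.pi fun _ : Fin k2 => μ))
    (hcase : (k1 ≠ k2 ∧ l ≤ min k1 k2) ∨ (k1 = k2 ∧ l < k1)) :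
    Tendsto (fun n : ℕ => Fln (P n) ((n : ℝ) / a n) k1 k2 l f g) atTop (𝓝 0) := by
  classical
  set D : ℕ → ℝ≥0∞ := fun n => ENNReal.ofReal (Real.sqrt ((n : ℝ) / a n)) with hD
  have hD2 : ∀ᶠ n in atTop, D n ^ 2 = ENNReal.ofReal ((n : ℝ) / a n) := by
    filter_upwards [eventually_ge_atTop 1] with n hn
    rw [hD, ← ENNReal.ofReal_pow (Real.sqrt_nonneg _), Real.sq_sqrt]
    exact div_nonneg (Nat.cast_nonneg _) (h21.2.1 n hn).le
  have hle : ∀ᶠ n in atTop, ∀ B, MeasurableSet B → D n ^ 2 * P n B ≤ μ B := by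
    filter_upwards [hD2, eventually_ge_atTop 1] with n h hn B hB
    rw [h]
    exact aux_le h21 n hn B hB
  have hD0 : ∀ᶠ n in atTop, D n ^ 2 ≠ 0 := by
    filter_upwards [hD2, (aux_c_tendsto h21).eventually
      (eventually_gt_nhds ENNReal.zero_lt_top)] with n h h'
    rw [h]
    exact h'.ne'
  have hP := aux_P_tendsto h21
  -- measurable representatives
  obtain ⟨f', hf'm, hff'⟩ := hf.1
  obtain ⟨g', hg'm, hgg'⟩ := hg.1
  have hf'2 := aux_sq ((memLp_congr_ae hff').1 hf)
  have hg'2 := aux_sq ((memLp_congr_ae hgg').1 hg)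
  have key : ∀ (j1 : Fin l ↪ Fin k1) (j2 : Fin l ↪ Fin k2),
      Tendsto (fun n : ℕ => Real.sqrt ((n : ℝ) / a n) ^ (k1 + k2) *
        ∫ q : (Fin k1 → E) × (Fin k2 → E), f q.1 * g (subst j1 j2 q.1 q.2)
        ∂((Measure.pi fun _ : Fin k1 => P n).prod (Measure.pi fun _ : Fin k2 => P n)))
        atTop (𝓝 0) := by
    intro j1 j2
    let σ : Fin k2 → Fin k1 ⊕ Fin k2 := fun i =>
      if h : ∃ s, j2 s = i then Sum.inl (j1 (Classical.choose h)) else Sum.inr i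
    have hσpos : ∀ i, ∀ h : ∃ s, j2 s = i, σ i = Sum.inl (j1 (Classical.choose h)) :=
      fun i h => dif_pos h
    have hσneg : ∀ i, (¬ ∃ s, j2 s = i) → σ i = Sum.inr i := fun i h => dif_neg h
    have hσ : Function.Injective σ := by
      intro i i' hii
      by_cases h : ∃ s, j2 s = i <;> by_cases h' : ∃ s, j2 s = i'
      · rw [hσpos i h, hσpos i' h'] at hii
        have := j1.injective (Sum.inl_injective hii)
        rw [← Classical.choose_spec h, ← Classical.choose_spec h', this]
      · rw [hσpos i h, hσneg i' h'] at hii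
        cases hii
      · rw [hσneg i h, hσpos i' h'] at hii
        cases hii
      · rw [hσneg i h, hσneg i' h'] at hii
        exact Sum.inr_injective hii
    have hsub : ∀ w : Fin k1 ⊕ Fin k2 → E,
        subst j1 j2 (fun i => w (Sum.inl i)) (fun i => w (Sum.inr i)) = fun i => w (σ i) := by
      intro w
      funext i
      by_cases h : ∃ s, j2 s = i
      · rw [hσpos i h]; exact dif_pos h
      · rw [hσneg i h]; exact dif_neg h
    have main : Tendsto (fun n => D n ^ (k1 + k2) *
        ∫⁻ w : Fin k1 ⊕ Fin k2 → E, ‖f' (fun i => w (Sum.inl i))‖ₑ * ‖g' (fun i => w (σ i))‖ₑ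
          ∂(Measure.pi fun _ => P n)) atTop (𝓝 0) := by
      have hF : Measurable fun x => ‖f' x‖ₑ := hf'm.measurable.enorm
      have hG : Measurable fun x => ‖g' x‖ₑ := hg'm.measurable.enorm
      by_cases hl : l < k1
      · obtain ⟨i0, hi0⟩ : ∃ i0, ∀ s, j1 s ≠ i0 := by
          by_contra hcon
          push Not at hcon
          have := Fintype.card_le_of_surjective j1 hcon
          simp at this
          omega
        refine aux_tendsto μ P D hle hP Sum.inl Sum.inl_injective σ hσ i0 ?_ _ hF _ hG hf'2 hg'2
        intro j hj
        by_cases h : ∃ s, j2 s = j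
        · rw [hσpos j h] at hj
          exact hi0 _ (Sum.inl_injective hj)
        · rw [hσneg j h] at hj
          cases hj
      · have hl2 : l < k2 := by omega
        obtain ⟨i0, hi0⟩ : ∃ i0, ∀ s, j2 s ≠ i0 := by
          by_contra hcon
          push Not at hcon
          have := Fintype.card_le_of_surjective j2 hcon
          simp at this
          omega
        have := aux_tendsto μ P D hle hP σ hσ Sum.inl Sum.inl_injective i0 ?_ _ hG _ hF hg'2 hf'2
        · simp_rw [add_comm k1 k2, mul_comm ‖f' _‖ₑ]
          exact this
        · intro j hj
          rw [hσneg i0 (fun ⟨s, hs⟩ => hi0 s hs)] at hj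
          cases hj
    rw [tendsto_zero_iff_enorm_tendsto_zero]
    refine tendsto_of_tendsto_of_tendsto_of_le_of_le' tendsto_const_nhds main
      (Eventually.of_forall fun _ => zero_le) ?_
    filter_upwards [hle, hD0] with n hlen hn0
    rw [enorm_mul, enorm_pow, Real.enorm_of_nonneg (Real.sqrt_nonneg _)]
    refine mul_le_mul' le_rfl ?_
    refine (enorm_integral_le_lintegral_enorm _).trans (le_of_eq ?_)
    have hmp := measurePreserving_sumPiEquivProdPi (fun _ : Fin k1 ⊕ Fin k2 => P n)
    rw [← hmp.lintegral_comp_emb (MeasurableEquiv.measurableEmbedding _)]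
    have ef := ((aux_mp (P n) (Sum.inl : Fin k1 → Fin k1 ⊕ Fin k2)
      Sum.inl_injective).quasiMeasurePreserving.ae_eq_comp
      ((aux_ac (k := k1) (P n) μ _ hn0 hlen).ae_eq hff'))
    have eg := ((aux_mp (P n) σ hσ).quasiMeasurePreserving.ae_eq_comp
      ((aux_ac (k := k2) (P n) μ _ hn0 hlen).ae_eq hgg'))
    refine lintegral_congr_ae ?_
    filter_upwards [ef, eg] with w h1 h2
    simp only [Function.comp] at h1 h2
    rw [← h1, ← h2, ← enorm_mul, ← hsub w]
    rfl
  have hsum := (tendsto_finsetSum Finset.univ fun j1 _ =>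
    tendsto_finsetSum Finset.univ fun j2 _ => key j1 j2).const_mul
    ((((Fintype.card (Fin l ↪ Fin k1) * Fintype.card (Fin l ↪ Fin k2) : ℕ) : ℝ))⁻¹)
  simp only [Finset.sum_const_zero, mul_zero] at hsum
  refine hsum.congr fun n => ?_
  unfold Fln
  simp_rw [← Finset.mul_sum]
  ring
end
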